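/- Let I^γ be a transport along a path γ : J → B in a fibre bundle π : E → B satisfying the uniqueness condition that I^γ_{r→s} = id whenever γ(r) = γ(s), r, s ∈ J. Then for any u, v ∈ π⁻¹(γ(J)), r ∈ q_γ(u), and s ∈ q_γ(v), the images of the liftings satisfy: either γ̄_{u,r}(J) ∩ γ̄_{v,s}(J) = ∅ or γ̄_{u,r}(J) = γ̄_{v,s}(J); i.e., two liftings of the same path either do not intersect or coincide as sets. -/

import Mathlib

/-- The fibre of `π : E → B` over the point `x : B`. -/
abbrev Fibre {E B : Type*} (π : E → B) (x : B) : Type _ := {e : E // π e = x}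

/-- The lifting `γ̄_{u,s₀}` of `γ` through `u` generated by the transport `I` along `γ`
with parameter `s₀ ∈ q_γ(u)`, given by `γ̄_{u,s₀}(s) := I^γ_{s₀→s}(u)`. -/
abbrev liftPt {E B : Type*} (π : E → B) {J : Set ℝ} {γ : J → B}
    (I : ∀ s t : J, Fibre π (γ s) → Fibre π (γ t))
    (u : E) (s₀ : J) (h : γ s₀ = π u) : J → E :=
  fun s => (I s₀ s ⟨u, h.symm⟩ : E)

/-- Corollary 4.2: If the transport `I^γ` satisfies the uniqueness
condition `I^γ_{r→s} = id` whenever `γ(r) = γ(s)`, then any two liftings of `γ`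
generated by `I^γ` either do not intersect or coincide as sets. -/
theorem liftings_disjoint_or_coincide
    {E B : Type*} (π : E → B) (J : Set ℝ) (hJ : J.OrdConnected) (γ : J → B)
    -- a transport along the path `γ`:
    (I : ∀ s t : J, Fibre π (γ s) → Fibre π (γ t))
    (hcomp : ∀ r s t : J, I t r ∘ I s t = I s r)
    (hid : ∀ s : J, I s s = id)
    -- the uniqueness condition (4.4):
    (huniq : ∀ (r s : J), γ r = γ s → ∀ v : Fibre π (γ r), (I r s v : E) = (v : E)) :
    ∀ (u v : E) (r s : J) (hr : γ r = π u) (hs : γ s = π v),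
      Set.range (liftPt π I u r hr) ∩ Set.range (liftPt π I v s hs) = ∅ ∨
      Set.range (liftPt π I u r hr) = Set.range (liftPt π I v s hs) := by
  intro u v r s hr hs
  rcases Set.eq_empty_or_nonempty
    (Set.range (liftPt π I u r hr) ∩ Set.range (liftPt π I v s hs)) with h | h
  · exact Or.inl h
  · right
    obtain ⟨w, ⟨a, ha⟩, ⟨b, hb⟩⟩ := h
    have ha' : (I r a ⟨u, hr.symm⟩ : E) = w := ha
    have hb' : (I s b ⟨v, hs.symm⟩ : E) = w := hb
    have hab : γ a = γ b := by
      rw [← (I r a ⟨u, hr.symm⟩).2, ← (I s b ⟨v, hs.symm⟩).2, ha', hb']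
    have key : I r b ⟨u, hr.symm⟩ = I s b ⟨v, hs.symm⟩ := by
      apply Subtype.ext
      rw [← hcomp b r a, Function.comp_apply, huniq a b hab, ha', hb']
    congr 1
    funext c
    show (I r c ⟨u, hr.symm⟩ : E) = (I s c ⟨v, hs.symm⟩ : E)
    rw [← hcomp c r b, ← hcomp c s b, Function.comp_apply, Function.comp_apply, key]
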